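/- Let G = (𝒩, w) be a closed integer octagonal graph (in particular, G has no negative weight proper cycles), and define G_t = (𝒩, w_t) by w_t(i,ī) = 2⌊w(i,ī)/2⌋ for all i ∈ 𝒩 and w_t(i,j) = w(i,j) whenever j ≠ ī. If G_t has a proper cycle of negative weight, then there exists i ∈ 𝒩 such that w_t(i,ī) + w_t(ī,i) < 0. -/

import Mathlib

/-- Extended rationals: ℚ ∪ {+∞}. -/
abbrev Qinf := WithTop ℚ

/-- Weight of a path (list of nodes): sum of the weights of its arcs. -/
def pathWeight {N : Type*} (w : N → N → Qinf) : List N → Qinf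
  | [] => 0
  | [_] => 0
  | a :: b :: l => w a b + pathWeight w (b :: l)

/-- A proper cycle: at least two arcs, first node equals last node,
    consecutive nodes distinct. -/
def IsProperCycle {N : Type*} (l : List N) : Prop :=
  3 ≤ l.length ∧ l.head? = l.getLast? ∧ l.Chain' (· ≠ ·)

/-- A graph is consistent if it has no proper cycle of negative weight. -/
def Consistent {N : Type*} (w : N → N → Qinf) : Prop :=
  ∀ l : List N, IsProperCycle l → 0 ≤ pathWeight w l

/-- A consistent graph is closed if self-loops have weight 0 and the
    triangle inequality holds. -/
def ClosedG {N : Type*} (w : N → N → Qinf) : Prop :=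
  Consistent w ∧ (∀ i, w i i = 0) ∧ ∀ i j k, w i j ≤ w i k + w k j

/-- The "bar" involution on nodes: ī = i+1 for even i, ī = i-1 for odd i. -/
def bar {n : ℕ} (i : Fin (2 * n)) : Fin (2 * n) :=
  if _h : i.val % 2 = 0 then ⟨i.val + 1, by have := i.isLt; omega⟩
  else ⟨i.val - 1, by have := i.isLt; omega⟩

/-- Coherence: w(i,j) = w(j̄,ī). -/
def Coherent {n : ℕ} (w : Fin (2 * n) → Fin (2 * n) → Qinf) : Prop :=
  ∀ i j, w i j = w (bar j) (bar i)

/-- An octagonal graph: consistent and coherent. -/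
def Octagonal {n : ℕ} (w : Fin (2 * n) → Fin (2 * n) → Qinf) : Prop :=
  Consistent w ∧ Coherent w

/-- Pointwise order on graphs. -/
def GLe {n : ℕ} (w₁ w₂ : Fin (2 * n) → Fin (2 * n) → Qinf) : Prop :=
  ∀ i j, w₁ i j ≤ w₂ i j

/-- Halving on ℚ∞ (with +∞/2 = +∞). -/
def half (x : Qinf) : Qinf := x.map (fun q => q / 2)

/-- Floored halving on ℚ∞ (with ⌊+∞/2⌋ = +∞). -/
def fhalf (x : Qinf) : Qinf := x.map (fun q => ((⌊q / 2⌋ : ℤ) : ℚ))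

/-- Integer weights: every weight is an integer or +∞. -/
def IntWeights {n : ℕ} (w : Fin (2 * n) → Fin (2 * n) → Qinf) : Prop :=
  ∀ i j, w i j = ⊤ ∨ ∃ d : ℤ, w i j = ((d : ℚ) : Qinf)

/-- A strongly closed octagonal graph. -/
def StronglyClosed {n : ℕ} (w : Fin (2 * n) → Fin (2 * n) → Qinf) : Prop :=
  Octagonal w ∧ ClosedG w ∧ ∀ i j, 2 * w i j ≤ w i (bar i) + w (bar j) j

/-- A tightly closed integer octagonal graph. -/
def TightlyClosed {n : ℕ} (w : Fin (2 * n) → Fin (2 * n) → Qinf) : Prop :=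
  IntWeights w ∧ StronglyClosed w ∧
    ∀ i, w i (bar i) = ⊤ ∨ ∃ d : ℤ, w i (bar i) = (((2 * d : ℤ) : ℚ) : Qinf)

/-!
Write `h i = ⌊w(i,ī)/2⌋` and `s(i,j) = min (w(i,j)) (h i + h j̄)`. Coherence and the triangle
inequality give `w(i,ī) ≤ 2 w(i,k) + w(k,k̄)`, and since `w(i,k)` is an integer this survives
floored halving: `h i ≤ w(i,k) + h k`. If moreover `0 ≤ h k + h k̄` for all `k`, that is, if no
unary pair is negative after tightening, then `s` satisfies the triangle inequality. Shortcutting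
a closed walk at `a` bounds its `s`-weight below by `s(a,a)`, which is nonnegative because
`s(a,a) ≤ 2 s(a,a)`; and `s` lies below the tightened graph.
-/

section PathWeight

variable {N : Type*}

theorem pathWeight_mono {v w : N → N → Qinf} (h : ∀ i j, v i j ≤ w i j) :
    ∀ l, pathWeight v l ≤ pathWeight w l
  | [] => le_rfl
  | [_] => le_rfl
  | a :: b :: l => add_le_add (h a b) (pathWeight_mono h (b :: l))

theorem le_pathWeight_of_triangle {w : N → N → Qinf} (htri : ∀ i j k, w i j ≤ w i k + w k j) :
    ∀ a b l, w a ((b :: l).getLast (List.cons_ne_nil b l)) ≤ pathWeight w (a :: b :: l)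
  | a, b, [] => (add_zero (w a b)).ge
  | _, b, c :: l => (htri _ _ b).trans (add_le_add_right (le_pathWeight_of_triangle htri b c l) _)

theorem diag_nonneg_of_triangle {w : N → N → Qinf} (htri : ∀ i j k, w i j ≤ w i k + w k j)
    (i : N) : 0 ≤ w i i := by
  have hloop := htri i i i
  generalize w i i = x at hloop ⊢
  induction x using WithTop.recTopCoe with
  | top => exact le_top
  | coe q => norm_cast at hloop ⊢; linarith

theorem pathWeight_nonneg_of_triangle {w : N → N → Qinf}
    (htri : ∀ i j k, w i j ≤ w i k + w k j) :
    ∀ {l : List N}, l.head? = l.getLast? → 0 ≤ pathWeight w l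
  | [], _ => le_rfl
  | [_], _ => le_rfl
  | a :: b :: l, hclosed => by
    have hlast : (b :: l).getLast (List.cons_ne_nil b l) = a := by
      simpa [List.getLast?_eq_getLast_of_ne_nil, eq_comm] using hclosed
    calc 0 ≤ w a a := diag_nonneg_of_triangle htri a
      _ ≤ pathWeight w (a :: b :: l) := by
        simpa only [hlast] using le_pathWeight_of_triangle htri a b l

end PathWeight

theorem two_mul_qinf (x : Qinf) : 2 * x = x + x := by
  induction x using WithTop.recTopCoe with
  | top => exact WithTop.mul_top two_ne_zero
  | coe q => exact congrArg WithTop.some (two_mul q)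

theorem fhalf_mono : Monotone fhalf :=
  Monotone.withTop_map fun _ _ h => by gcongr

theorem fhalf_add_self_add {x : Qinf} (hx : x = ⊤ ∨ ∃ d : ℤ, x = ((d : ℚ) : Qinf)) (y : Qinf) :
    fhalf (x + x + y) = x + fhalf y := by
  obtain rfl | ⟨d, rfl⟩ := hx
  · simp only [top_add]; rfl
  induction y using WithTop.recTopCoe with
  | top => simp only [add_top]; rfl
  | coe q =>
    have hfloor : ⌊((d : ℚ) + d + q) / 2⌋ = d + ⌊q / 2⌋ := by
      rw [← Int.floor_intCast_add]
      congr 1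
      ring
    have hcast : (⌊((d : ℚ) + d + q) / 2⌋ : ℚ) = d + ⌊q / 2⌋ := by
      rw [hfloor, Int.cast_add]
    exact congrArg WithTop.some hcast

section Tightening

variable {N : Type*}

/-- The tightened graph `w_t`, for a node map `σ` in the role of `i ↦ ī`: unary arcs `i → σ i` are
rounded down to even weights. -/
def tighten [DecidableEq N] (σ : N → N) (w : N → N → Qinf) (i j : N) : Qinf :=
  if j = σ i then 2 * fhalf (w i j) else w i j

/-- The floored half `⌊w(i,ī)/2⌋` of the unary arc leaving `i`, for `σ` in the role of `i ↦ ī`. -/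
def halfUnary (σ : N → N) (w : N → N → Qinf) (i : N) : Qinf :=
  fhalf (w i (σ i))

/-- The tight closure `min (w(i,j)) (⌊w(i,ī)/2⌋ + ⌊w(j̄,j)/2⌋)`, a lower bound of the tightened
graph. The arc `j̄ → j` is encoded as the unary arc leaving `σ j`, which is the same arc when `σ`
is an involution. -/
def tightClosure (σ : N → N) (w : N → N → Qinf) (i j : N) : Qinf :=
  min (w i j) (halfUnary σ w i + halfUnary σ w (σ j))

variable {σ : N → N} {w : N → N → Qinf}

theorem tighten_unary [DecidableEq N] (i : N) :
    tighten σ w i (σ i) = halfUnary σ w i + halfUnary σ w i := by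
  rw [tighten, if_pos rfl, two_mul_qinf, halfUnary]

theorem tighten_unary_pair_nonneg_iff [DecidableEq N] (hσ : Function.Involutive σ) (i : N) :
    0 ≤ tighten σ w i (σ i) + tighten σ w (σ i) i ↔
      0 ≤ halfUnary σ w i + halfUnary σ w (σ i) := by
  have hback := tighten_unary (σ := σ) (w := w) (σ i)
  rw [hσ i] at hback
  rw [tighten_unary, hback, add_add_add_comm, ← two_nsmul, nsmul_nonneg_iff two_ne_zero]

theorem tightClosure_le_tighten [DecidableEq N] (hσ : Function.Involutive σ) (i j : N) :
    tightClosure σ w i j ≤ tighten σ w i j := by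
  by_cases hj : j = σ i
  · subst hj
    rw [tighten_unary, tightClosure, hσ i]
    exact min_le_right _ _
  · rw [tighten, if_neg hj]
    exact min_le_left _ _

theorem halfUnary_le_add (hcoh : ∀ i j, w i j = w (σ j) (σ i))
    (hint : ∀ i j, w i j = ⊤ ∨ ∃ d : ℤ, w i j = ((d : ℚ) : Qinf))
    (htri : ∀ i j k, w i j ≤ w i k + w k j) (i k : N) :
    halfUnary σ w i ≤ w i k + halfUnary σ w k := by
  have hdetour : w i (σ i) ≤ w i k + w i k + w k (σ k) :=
    calc w i (σ i) ≤ w i k + w k (σ i) := htri _ _ _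
      _ ≤ w i k + (w k (σ k) + w (σ k) (σ i)) := by gcongr; exact htri _ _ _
      _ = w i k + w i k + w k (σ k) := by rw [← hcoh i k]; abel
  calc halfUnary σ w i ≤ fhalf (w i k + w i k + w k (σ k)) := fhalf_mono hdetour
    _ = w i k + halfUnary σ w k := fhalf_add_self_add (hint i k) _

theorem tightClosure_triangle (hcoh : ∀ i j, w i j = w (σ j) (σ i))
    (hint : ∀ i j, w i j = ⊤ ∨ ∃ d : ℤ, w i j = ((d : ℚ) : Qinf))
    (htri : ∀ i j k, w i j ≤ w i k + w k j)
    (hpair : ∀ k, 0 ≤ halfUnary σ w k + halfUnary σ w (σ k)) (i j k : N) :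
    tightClosure σ w i j ≤ tightClosure σ w i k + tightClosure σ w k j := by
  have hle := halfUnary_le_add hcoh hint htri
  unfold tightClosure
  set h := halfUnary σ w
  rcases min_choice (w i k) (h i + h (σ k)) with hik | hik <;>
    rcases min_choice (w k j) (h k + h (σ j)) with hkj | hkj <;> rw [hik, hkj]
  · exact (min_le_left _ _).trans (htri i j k)
  · calc min (w i j) (h i + h (σ j)) ≤ h i + h (σ j) := min_le_right _ _
      _ ≤ (w i k + h k) + h (σ j) := by gcongr; exact hle i k
      _ = w i k + (h k + h (σ j)) := add_assoc _ _ _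
  · calc min (w i j) (h i + h (σ j)) ≤ h i + h (σ j) := min_le_right _ _
      _ ≤ h i + (w (σ j) (σ k) + h (σ k)) := by gcongr; exact hle (σ j) (σ k)
      _ = (h i + h (σ k)) + w k j := by rw [← hcoh k j]; abel
  · calc min (w i j) (h i + h (σ j)) ≤ h i + h (σ j) := min_le_right _ _
      _ ≤ (h i + h (σ j)) + (h k + h (σ k)) := le_add_of_nonneg_right (hpair k)
      _ = (h i + h (σ k)) + (h k + h (σ j)) := by abel

theorem tightening_negative_cycle_on_unary_pair_general [DecidableEq N]
    (hσ : Function.Involutive σ) (hcoh : ∀ i j, w i j = w (σ j) (σ i))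
    (hint : ∀ i j, w i j = ⊤ ∨ ∃ d : ℤ, w i j = ((d : ℚ) : Qinf))
    (htri : ∀ i j k, w i j ≤ w i k + w k j)
    (hneg : ∃ l : List N, l.head? = l.getLast? ∧ pathWeight (tighten σ w) l < 0) :
    ∃ i, tighten σ w i (σ i) + tighten σ w (σ i) i < 0 := by
  by_contra! hpair
  obtain ⟨l, hclosed, hlt⟩ := hneg
  have htight := tightClosure_triangle hcoh hint htri
    fun k => (tighten_unary_pair_nonneg_iff hσ k).1 (hpair k)
  have hnonneg : 0 ≤ pathWeight (tighten σ w) l :=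
    (pathWeight_nonneg_of_triangle htight hclosed).trans
      (pathWeight_mono (tightClosure_le_tighten hσ) l)
  exact hnonneg.not_gt hlt

end Tightening

theorem bar_involutive {n : ℕ} : Function.Involutive (bar (n := n)) := by
  intro i
  ext
  unfold bar
  split_ifs <;> grind

/-- If tightening a closed integer octagonal graph creates a
    negative cycle, then it already creates a negative two-arc cycle on some
    pair (i, ī). -/
theorem tightening_negative_cycle_on_unary_pair
    {n : ℕ} (hn : 1 ≤ n) (w : Fin (2 * n) → Fin (2 * n) → Qinf)
    (hoct : Octagonal w) (hint : IntWeights w) (hcl : ClosedG w)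
    (wt : Fin (2 * n) → Fin (2 * n) → Qinf)
    (hwt : ∀ i j, wt i j = if j = bar i then 2 * fhalf (w i j) else w i j)
    (hneg : ∃ l : List (Fin (2 * n)), IsProperCycle l ∧ pathWeight wt l < 0) :
    ∃ i : Fin (2 * n), wt i (bar i) + wt (bar i) i < 0 := by
  obtain rfl : wt = tighten bar w := funext₂ hwt
  obtain ⟨l, hcycle, hlt⟩ := hneg
  exact tightening_negative_cycle_on_unary_pair_general bar_involutive hoct.2 hint hcl.2.2
    ⟨l, hcycle.2.1, hlt⟩
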